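/- arXiv:2512.14378 — 2 statements merged into one kernel-verified Lean document; each statement's English description precedes it below -/
import Mathlib

section
/- Let n ≥ 8 be divisible by 4, let H be a saturated orthogonal array OA(n,n−1,2,2), and let c_{i₀} be a fixed column of H. Let X be the n × (2n−3) two-level design whose columns are the n−1 columns of H together with the n−2 interaction columns of c_{i₀} with each other column of H. Then E(s²)(X) = n²/(2n−3), and X is E(s²)-optimal: E(s²)(X) ≤ E(s²)(Y) for every n × (2n−3) balanced two-level design Y. -/
open Finset

/-- The `E(s²)` value of an `n × m` two-level design `X` (columns indexed by `ι`,
`m = card ι`): the average of the squared off-diagonal entries of `XᵀX`. -/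
noncomputable def Es2 {n : ℕ} {ι : Type} [Fintype ι] [DecidableEq ι]
    (X : Fin n → ι → ℚ) : ℚ :=
  (∑ i : ι, ∑ j : ι, if i ≠ j then (∑ r : Fin n, X r i * X r j) ^ 2 else 0) /
    ((Fintype.card ι : ℚ) * ((Fintype.card ι : ℚ) - 1))

theorem aux_swap {n : ℕ} {ι : Type} [Fintype ι] (X : Fin n → ι → ℚ) :
    ∑ i : ι, ∑ j : ι, (∑ r : Fin n, X r i * X r j) ^ 2
      = ∑ r : Fin n, ∑ t : Fin n, (∑ i : ι, X r i * X t i) ^ 2 := by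
  have h1 : ∀ i j : ι, (∑ r : Fin n, X r i * X r j) ^ 2
      = ∑ p : Fin n × Fin n, X p.1 i * X p.1 j * (X p.2 i * X p.2 j) := by
    intro i j
    rw [sq, Finset.sum_mul_sum, ← Finset.univ_product_univ, Finset.sum_product]
  have h2 : ∀ r t : Fin n, (∑ i : ι, X r i * X t i) ^ 2
      = ∑ p : ι × ι, X r p.1 * X t p.1 * (X r p.2 * X t p.2) := by
    intro i j
    rw [sq, Finset.sum_mul_sum, ← Finset.univ_product_univ, Finset.sum_product]
  simp only [h1, h2]
  have h3 : ∑ i : ι, ∑ j : ι, ∑ p : Fin n × Fin n, X p.1 i * X p.1 j * (X p.2 i * X p.2 j)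
      = ∑ q : ι × ι, ∑ p : Fin n × Fin n,
        X p.1 q.1 * X p.1 q.2 * (X p.2 q.1 * X p.2 q.2) := by
    rw [Fintype.sum_prod_type]
  have h4 : ∑ r : Fin n, ∑ t : Fin n, ∑ q : ι × ι, X r q.1 * X t q.1 * (X r q.2 * X t q.2)
      = ∑ p : Fin n × Fin n, ∑ q : ι × ι,
        X p.1 q.1 * X p.2 q.1 * (X p.1 q.2 * X p.2 q.2) := by
    rw [Fintype.sum_prod_type]
  rw [h3, h4, Finset.sum_comm]
  refine Finset.sum_congr rfl fun p _ => Finset.sum_congr rfl fun q _ => ?_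
  ring

theorem aux_Es2 {n : ℕ} {ι : Type} [Fintype ι] [DecidableEq ι] (X : Fin n → ι → ℚ)
    (hX : ∀ i j, X i j = 1 ∨ X i j = -1) :
    Es2 X = (∑ r : Fin n, ∑ t : Fin n, (∑ i : ι, X r i * X t i) ^ 2
        - (Fintype.card ι : ℚ) * (n : ℚ) ^ 2) /
      ((Fintype.card ι : ℚ) * ((Fintype.card ι : ℚ) - 1)) := by
  have hsq : ∀ i j, X i j * X i j = 1 := by
    intro i j; rcases hX i j with h | h <;> rw [h] <;> norm_num
  unfold Es2
  congr 1
  rw [← aux_swap]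
  have h : ∀ i : ι, (∑ j : ι, if i ≠ j then (∑ r : Fin n, X r i * X r j) ^ 2 else 0)
      = ∑ j : ι, (∑ r : Fin n, X r i * X r j) ^ 2 - (n : ℚ) ^ 2 := by
    intro i
    have : ∀ j : ι, (if i ≠ j then (∑ r : Fin n, X r i * X r j) ^ 2 else 0)
        = (∑ r : Fin n, X r i * X r j) ^ 2 - (if i = j then (n : ℚ) ^ 2 else 0) := by
      intro j
      by_cases hij : i = j
      · subst hij; simp [hsq]
      · simp [hij]
    simp only [this, Finset.sum_sub_distrib]
    simp
  simp only [h, Finset.sum_sub_distrib]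
  simp

theorem aux_parity {ι : Type} (s : Finset ι) (f : ι → ℚ) (hf : ∀ i, f i = 1 ∨ f i = -1) :
    ∃ k : ℤ, ∑ i ∈ s, f i = (s.card : ℚ) + 2 * k := by
  classical
  induction s using Finset.induction_on with
  | empty => exact ⟨0, by simp⟩
  | insert a s ha ih =>
    obtain ⟨k, hk⟩ := ih
    rw [Finset.sum_insert ha, Finset.card_insert_of_notMem ha, hk]
    rcases hf a with h | h
    · exact ⟨k, by rw [h]; push_cast; ring⟩
    · exact ⟨k - 1, by rw [h]; push_cast; ring⟩

theorem aux_rows (n : ℕ) (hn : 8 ≤ n) (H : Fin n → Fin (n - 1) → ℚ)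
    (hpm : ∀ i j, H i j = 1 ∨ H i j = -1)
    (hbal : ∀ j, ∑ i : Fin n, H i j = 0)
    (horth : ∀ j k : Fin (n - 1), j ≠ k → ∑ i : Fin n, H i j * H i k = 0) (r t : Fin n) :
    ∑ j, H r j * H t j = (if r = t then (n : ℚ) else 0) - 1 := by
  have hsq : ∀ i j, H i j * H i j = 1 := by
    intro i j; rcases hpm i j with h | h <;> rw [h] <;> norm_num
  have hn0 : (n : ℚ) ≠ 0 := by positivity
  let M : Matrix (Fin n) (Option (Fin (n - 1))) ℚ := fun i o => o.elim 1 (H i)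
  have hM : ((n : ℚ)⁻¹ • M.transpose) * M = 1 := by
    rw [Matrix.smul_mul]
    ext a b
    rw [Matrix.smul_apply, Matrix.mul_apply, Matrix.one_apply]
    simp only [Matrix.transpose_apply]
    rcases a with _ | a <;> rcases b with _ | b
    · simp [M, hn0]
    · simp [M, hbal]
    · simp [M, hbal]
    · by_cases hab : a = b
      · subst hab; simp [M, hsq, hn0]
      · simp [M, hab, horth a b hab]
  replace hM := (Matrix.mul_eq_one_comm_of_card_eq _ _ _ (by simp; omega)).1 hM
  have := congrFun (congrFun hM r) t
  rw [Matrix.mul_smul, Matrix.smul_apply, Matrix.mul_apply, Matrix.one_apply] at this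
  simp only [Fintype.sum_option, Matrix.transpose_apply, smul_eq_mul] at this
  simp only [M, Option.elim] at this
  rw [inv_mul_eq_iff_eq_mul₀ hn0] at this
  split_ifs at this ⊢ <;> linarith

/-- Augmenting a saturated `OA(n, n-1, 2, 2)` with the `n-2` interaction
columns of one fixed parent column `c_{i₀}` with each other column yields an
`n × (2n-3)` design `X` with `E(s²)(X) = n²/(2n-3)`, which is `E(s²)`-optimal among
all balanced `n × (2n-3)` two-level designs. -/
theorem Es2_optimal_one_parent (n : ℕ) (hn : 8 ≤ n) (h4 : 4 ∣ n)
    (H : Fin n → Fin (n - 1) → ℚ)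
    (hpm : ∀ i j, H i j = 1 ∨ H i j = -1)
    (hbal : ∀ j, ∑ i : Fin n, H i j = 0)
    (horth : ∀ j k : Fin (n - 1), j ≠ k → ∑ i : Fin n, H i j * H i k = 0)
    (i0 : Fin (n - 1))
    (X : Fin n → (Fin (n - 1) ⊕ {j : Fin (n - 1) // j ≠ i0}) → ℚ)
    (hX : ∀ r, X r = Sum.elim (fun j => H r j) (fun j => H r i0 * H r j.1)) :
    Es2 X = (n : ℚ) ^ 2 / (2 * (n : ℚ) - 3) ∧
      ∀ Y : Fin n → Fin (2 * n - 3) → ℚ,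
        (∀ i j, Y i j = 1 ∨ Y i j = -1) → (∀ j, ∑ i : Fin n, Y i j = 0) →
          Es2 X ≤ Es2 Y := by
  have hnq : (8 : ℚ) ≤ n := by exact_mod_cast hn
  have hsq : ∀ i j, H i j * H i j = 1 := by
    intro i j; rcases hpm i j with h | h <;> rw [h] <;> norm_num
  have hXpm : ∀ i j, X i j = 1 ∨ X i j = -1 := by
    intro i j
    rw [hX]
    rcases j with j | j
    · exact hpm i j
    · simp only [Sum.elim_inr]
      rcases hpm i i0 with h | h <;> rcases hpm i j.1 with h' | h' <;> rw [h, h'] <;> norm_num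
  have hG : ∀ r t, ∑ i, X r i * X t i
      = (if r = t then 2 * (n : ℚ) else 0) - 2 - H r i0 * H t i0 := by
    intro r t
    have hR := aux_rows n hn H hpm hbal horth r t
    rw [Fintype.sum_sum_type]
    simp only [hX, Sum.elim_inl, Sum.elim_inr]
    have h2 : ∑ j : {j : Fin (n - 1) // j ≠ i0}, H r i0 * H r j.1 * (H t i0 * H t j.1)
        = H r i0 * H t i0 * (∑ j, H r j * H t j - H r i0 * H t i0) := by
      rw [← Finset.sum_subtype (univ.erase i0) (by simp)
        (fun j => H r i0 * H r j * (H t i0 * H t j)),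
        ← Finset.sum_erase_eq_sub (Finset.mem_univ i0), Finset.mul_sum]
      exact Finset.sum_congr rfl fun j _ => by ring
    rw [h2, hR]
    have ha := hsq r i0
    have hb := hsq t i0
    have hc : H r i0 * H t i0 * (H r i0 * H t i0) = 1 := by
      calc _ = (H r i0 * H r i0) * (H t i0 * H t i0) := by ring
        _ = 1 := by rw [ha, hb]; norm_num
    split_ifs with hrt
    · subst hrt
      rw [ha]; ring
    · linear_combination -hc
  have hcardX : (Fintype.card (Fin (n - 1) ⊕ {j : Fin (n - 1) // j ≠ i0}) : ℚ)
      = 2 * (n : ℚ) - 3 := by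
    have : Fintype.card (Fin (n - 1) ⊕ {j : Fin (n - 1) // j ≠ i0}) + 3 = 2 * n := by
      simp [Fintype.card_subtype_compl]; omega
    have h' : ((Fintype.card (Fin (n - 1) ⊕ {j : Fin (n - 1) // j ≠ i0}) : ℕ) : ℚ) + 3
      = 2 * n := by exact_mod_cast this
    linarith
  have hrow : ∀ r, ∑ t, (∑ i, X r i * X t i) ^ 2 = 4 * (n : ℚ) ^ 2 - 7 * n := by
    intro r
    have : ∀ t, (∑ i, X r i * X t i) ^ 2
        = (if r = t then 4 * (n : ℚ) ^ 2 - 12 * n else 0) + 5 + 4 * H r i0 * H t i0 := by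
      intro t
      rw [hG]
      have ha := hsq r i0
      have hb := hsq t i0
      have hc : H r i0 * H t i0 * (H r i0 * H t i0) = 1 := by
        calc _ = (H r i0 * H r i0) * (H t i0 * H t i0) := by ring
          _ = 1 := by rw [ha, hb]; norm_num
      split_ifs with hrt
      · subst hrt
        rw [mul_assoc, ha]; ring
      · linear_combination hc
    simp only [this, Finset.sum_add_distrib, ← Finset.mul_sum, hbal]
    simp
    ring
  have hval : Es2 X = (n : ℚ) ^ 2 / (2 * (n : ℚ) - 3) := by
    rw [aux_Es2 X hXpm, hcardX]
    simp only [hrow, Finset.sum_const, Finset.card_univ, Fintype.card_fin, nsmul_eq_mul]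
    have h1 : 2 * (n : ℚ) - 3 ≠ 0 := by linarith
    have h2 : 2 * (n : ℚ) - 3 - 1 ≠ 0 := by linarith
    rw [div_eq_div_iff (mul_ne_zero h1 h2) h1]
    ring
  refine ⟨hval, fun Y hY hYb => ?_⟩
  have hcardY : (Fintype.card (Fin (2 * n - 3)) : ℚ) = 2 * (n : ℚ) - 3 := by
    rw [Fintype.card_fin, Nat.cast_sub (by omega)]; push_cast; ring
  rw [aux_Es2 X hXpm, aux_Es2 Y hY, hcardX, hcardY]
  apply div_le_div_of_nonneg_right _ (mul_nonneg (by linarith) (by linarith))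
  apply sub_le_sub_right
  apply Finset.sum_le_sum
  intro r _
  rw [hrow]
  have hYpos : ∀ t, 0 ≤ (∑ i, Y r i * Y t i + 1) * (∑ i, Y r i * Y t i + 3) := by
    intro t
    obtain ⟨k, hk⟩ := aux_parity univ (fun i => Y r i * Y t i) (by
      intro i
      rcases hY r i with h | h <;> rcases hY t i with h' | h' <;> simp only [h, h'] <;> norm_num)
    rw [Finset.card_univ, hcardY] at hk
    rw [hk]
    have : (0 : ℤ) ≤ (n + k - 1) * (n + k) := by
      rcases le_or_gt ((n : ℤ) + k) 0 with h | h
      · exact mul_nonneg_of_nonpos_of_nonpos (by omega) h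
      · exact mul_nonneg (by omega) h.le
    have h' : (0 : ℚ) ≤ ((n : ℚ) + k - 1) * (n + k) := by exact_mod_cast this
    linarith
  have hdiag : ∑ i, Y r i * Y r i = 2 * (n : ℚ) - 3 := by
    rw [← hcardY]
    have : ∀ i, Y r i * Y r i = 1 := by
      intro i; rcases hY r i with h | h <;> rw [h] <;> norm_num
    simp [this]
  have hle := Finset.single_le_sum (fun t _ => hYpos t) (Finset.mem_univ r)
  have hz : ∑ t, ∑ i, Y r i * Y t i = 0 := by
    rw [Finset.sum_comm]
    simp [← Finset.mul_sum, hYb]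
  have hexp : ∑ t, (∑ i, Y r i * Y t i + 1) * (∑ i, Y r i * Y t i + 3)
      = ∑ t, (∑ i, Y r i * Y t i) ^ 2 + 3 * n := by
    have : ∀ t, (∑ i, Y r i * Y t i + 1) * (∑ i, Y r i * Y t i + 3)
      = (∑ i, Y r i * Y t i) ^ 2 + 4 * (∑ i, Y r i * Y t i) + 3 := by intro t; ring
    simp only [this, Finset.sum_add_distrib]
    rw [← Finset.mul_sum, hz]
    simp
    ring
  rw [hexp, hdiag] at hle
  linarith
end

section
/- Let n ≥ 12 be divisible by 4, let H be a saturated orthogonal array OA(n,n−1,2,2), let H' be the n×(n−3) design obtained from H by deleting two distinct fixed columns a and b, and let c_{i₀} be a fixed column of H'. Let d be the nonnegative integer with 4d = #{rows i : a_i·b_i·(c_{i₀})_i = +1}. Let X be the n × (2n−7) two-level design whose columns are the n−3 columns of H' together with the n−4 interaction columns of c_{i₀} with each other column of H'. Then E(s²)(X) = (n³ − 4n² − 32nd + 128d²)/((2n−7)(n−4)). -/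
open Finset

theorem aux_row {n : ℕ} (hn : 12 ≤ n) (H : Fin n → Fin (n - 1) → ℚ)
    (hpm : ∀ i j, H i j = 1 ∨ H i j = -1)
    (hbal : ∀ j, ∑ i : Fin n, H i j = 0)
    (horth : ∀ j k : Fin (n - 1), j ≠ k → ∑ i : Fin n, H i j * H i k = 0) (r s : Fin n) :
    ∑ j, H r j * H s j = (if r = s then (n : ℚ) else 0) - 1 := by
  have hn0 : (n : ℚ) ≠ 0 := by
    have : n ≠ 0 := by omega
    exact_mod_cast this
  let M : Matrix (Fin n) (Option (Fin (n - 1))) ℚ := fun r j => j.elim 1 (H r)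
  let N : Matrix (Option (Fin (n - 1))) (Fin n) ℚ := fun j r => (n : ℚ)⁻¹ * j.elim 1 (H r)
  have h1 : N * M = 1 := by
    ext j k
    rw [Matrix.mul_apply, Matrix.one_apply]
    rcases j with _ | j <;> rcases k with _ | k
    · simp [M, N, hn0]
    · simp [M, N, ← Finset.mul_sum, hbal]
    · simp [M, N, ← Finset.mul_sum, hbal]
    · simp only [M, N, Option.elim, mul_assoc, ← Finset.mul_sum, Option.some.injEq]
      split_ifs with h
      · subst h
        have : ∀ i, H i j * H i j = 1 := fun i => by rcases hpm i j with h | h <;> simp [h]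
        simp [this, hn0]
      · simp [horth j k h]
  have h2 : M * N = 1 := by
    refine (Matrix.mul_eq_one_comm_of_card_eq _ _ _ ?_).1 h1
    simp; omega
  have h3 := congrFun (congrFun h2 r) s
  rw [Matrix.mul_apply, Matrix.one_apply, Fintype.sum_option] at h3
  simp only [M, N, Option.elim, mul_left_comm _ ((n : ℚ)⁻¹), ← Finset.mul_sum] at h3
  have h4 : 1 + ∑ j, H r j * H s j = n * (if r = s then 1 else 0) := by
    rw [← h3]; field_simp
  rw [eq_sub_iff_add_eq, add_comm, h4]; split_ifs <;> simp

theorem aux_parseval {n : ℕ} (hn : 12 ≤ n) (H : Fin n → Fin (n - 1) → ℚ)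
    (hpm : ∀ i j, H i j = 1 ∨ H i j = -1)
    (hbal : ∀ j, ∑ i : Fin n, H i j = 0)
    (horth : ∀ j k : Fin (n - 1), j ≠ k → ∑ i : Fin n, H i j * H i k = 0) (v : Fin n → ℚ) :
    ∑ j, (∑ r, v r * H r j) ^ 2 = n * (∑ r, v r ^ 2) - (∑ r, v r) ^ 2 := by
  have h : ∑ j, (∑ r, v r * H r j) ^ 2 = ∑ r, ∑ s, v r * v s * ∑ j, H r j * H s j := by
    simp only [sq, Finset.sum_mul_sum]
    simp only [Finset.mul_sum]
    rw [Finset.sum_comm]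
    refine Finset.sum_congr rfl fun r _ => ?_
    rw [Finset.sum_comm]
    refine Finset.sum_congr rfl fun s _ => Finset.sum_congr rfl fun j _ => ?_
    ring
  rw [h]
  simp only [aux_row hn H hpm hbal horth, mul_sub, Finset.sum_sub_distrib, mul_one,
    mul_ite, mul_zero, Finset.sum_ite_eq, Finset.mem_univ, if_true]
  rw [sq (∑ r, v r), Finset.sum_mul_sum, Finset.mul_sum]
  congr 1
  exact Finset.sum_congr rfl fun r _ => by ring

theorem aux_sub1 {T : Type} [Fintype T] [DecidableEq T] (c : T) (f : T → ℚ) :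
    ∑ j : {j : T // j ≠ c}, f j.1 = ∑ j, f j - f c := by
  rw [← Finset.sum_subtype (Finset.univ.erase c) (by simp) f, eq_sub_iff_add_eq,
    Finset.sum_erase_add _ _ (Finset.mem_univ c)]

theorem aux_sub2 {T : Type} [Fintype T] [DecidableEq T] (a b : T) (hab : a ≠ b) (f : T → ℚ) :
    ∑ j : {j : T // j ≠ a ∧ j ≠ b}, f j.1 = ∑ j, f j - f a - f b := by
  rw [← Finset.sum_subtype ((Finset.univ.erase b).erase a) (by simp) f, eq_sub_iff_add_eq,
    eq_sub_iff_add_eq, add_right_comm,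
    Finset.sum_erase_add _ _ (by simp [hab]), Finset.sum_erase_add _ _ (Finset.mem_univ b)]

/-- Let `H'` be a saturated `OA(n, n-1, 2, 2)` with two distinct fixed
columns `a, b` deleted, let `c_{i₀}` be a fixed column of `H'`, and let `4d` be the
number of rows `i` with `aᵢ·bᵢ·(c_{i₀})ᵢ = +1`. Augmenting `H'` with the `n-4`
interaction columns of `c_{i₀}` with each other column of `H'` yields an
`n × (2n-7)` design `X` with `E(s²)(X) = (n³ - 4n² - 32nd + 128d²)/((2n-7)(n-4))`. -/
theorem Es2_one_parent_delete_two (n : ℕ) (hn : 12 ≤ n) (h4 : 4 ∣ n)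
    (H : Fin n → Fin (n - 1) → ℚ)
    (hpm : ∀ i j, H i j = 1 ∨ H i j = -1)
    (hbal : ∀ j, ∑ i : Fin n, H i j = 0)
    (horth : ∀ j k : Fin (n - 1), j ≠ k → ∑ i : Fin n, H i j * H i k = 0)
    (a b : Fin (n - 1)) (hab : a ≠ b)
    (i0 : {j : Fin (n - 1) // j ≠ a ∧ j ≠ b})
    (d : ℕ)
    (hd : 4 * d =
      ((Finset.univ : Finset (Fin n)).filter (fun i => H i a * H i b * H i i0.1 = 1)).card)
    (X : Fin n → ({j : Fin (n - 1) // j ≠ a ∧ j ≠ b} ⊕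
      {j : {j : Fin (n - 1) // j ≠ a ∧ j ≠ b} // j ≠ i0}) → ℚ)
    (hX : ∀ r, X r = Sum.elim (fun j => H r j.1) (fun j => H r i0.1 * H r j.1.1)) :
    Es2 X = ((n : ℚ) ^ 3 - 4 * (n : ℚ) ^ 2 - 32 * (n : ℚ) * (d : ℚ)
        + 128 * (d : ℚ) ^ 2) / ((2 * (n : ℚ) - 7) * ((n : ℚ) - 4)) := by
  have hsq : ∀ i j, H i j * H i j = 1 := fun i j => by rcases hpm i j with h | h <;> simp [h]
  obtain ⟨c, hca, hcb⟩ := i0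
  dsimp only at hd hX
  set S : Fin (n - 1) → Fin (n - 1) → ℚ := fun j k => ∑ r, H r c * H r k * H r j with hS
  have hnq : (12 : ℚ) ≤ n := by exact_mod_cast hn
  have hsymm : ∀ j k, S j k = S k j := fun j k => by
    simp only [hS]; exact Finset.sum_congr rfl fun r _ => by ring
  have hdiag : ∀ j, S j j = 0 := fun j => by
    simp only [hS, mul_assoc, hsq, mul_one, hbal]
  have hc : ∀ k, S c k = 0 := fun k => by
    rw [← hbal k]; simp only [hS]
    exact Finset.sum_congr rfl fun r _ => by linear_combination H r k * hsq r c
  have hpars : ∀ k, k ≠ c → ∑ j, S j k ^ 2 = (n : ℚ) ^ 2 := fun k hk => by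
    have h := aux_parseval hn H hpm hbal horth (fun r => H r c * H r k)
    have h1 : ∀ r, (H r c * H r k) ^ 2 = 1 := fun r => by
      linear_combination (H r k * H r k) * hsq r c + hsq r k
    simp only [h1, horth c k hk.symm] at h
    simp only [hS]; rw [h]; simp; ring
  have hSab : S a b = 8 * d - n := by
    have h1 : ∀ r, H r c * H r b * H r a =
        2 * (if H r a * H r b * H r c = 1 then 1 else 0) - 1 := fun r => by
      rcases hpm r a with h | h <;> rcases hpm r b with h' | h' <;>
        rcases hpm r c with h'' | h'' <;> rw [h, h', h''] <;> norm_num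
    simp only [hS]
    rw [Finset.sum_congr rfl fun r _ => h1 r, Finset.sum_sub_distrib, ← Finset.mul_sum,
      Finset.sum_boole, ← hd]
    simp; ring
  have hcard1 : (Fintype.card {j : Fin (n - 1) // j ≠ a ∧ j ≠ b} : ℚ) = n - 3 := by
    have h := aux_sub2 a b hab (fun _ => (1 : ℚ))
    simp only [Finset.sum_const, Finset.card_univ, nsmul_eq_mul, mul_one, Fintype.card_fin] at h
    rw [h, Nat.cast_sub (by omega)]; push_cast; ring
  have hcard2 : (Fintype.card {j : {j : Fin (n - 1) // j ≠ a ∧ j ≠ b} // j ≠ ⟨c, hca, hcb⟩} : ℚ)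
      = n - 4 := by
    have h := aux_sub1 (T := {j : Fin (n - 1) // j ≠ a ∧ j ≠ b}) ⟨c, hca, hcb⟩ (fun _ => (1 : ℚ))
    simp only [Finset.sum_const, Finset.card_univ, nsmul_eq_mul, mul_one] at h
    rw [h, hcard1]; ring
  have hT : ∑ k : {j : {j : Fin (n - 1) // j ≠ a ∧ j ≠ b} // j ≠ ⟨c, hca, hcb⟩},
      ∑ j : {j : Fin (n - 1) // j ≠ a ∧ j ≠ b}, S j.1 k.1.1 ^ 2
      = (n : ℚ) ^ 3 - 6 * n ^ 2 + 2 * (8 * d - n) ^ 2 := by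
    have h1 : ∀ k : {j : {j : Fin (n - 1) // j ≠ a ∧ j ≠ b} // j ≠ ⟨c, hca, hcb⟩},
        ∑ j : {j : Fin (n - 1) // j ≠ a ∧ j ≠ b}, S j.1 k.1.1 ^ 2
        = (n : ℚ) ^ 2 - S a k.1.1 ^ 2 - S b k.1.1 ^ 2 := fun k => by
      rw [aux_sub2 a b hab (fun j => S j k.1.1 ^ 2), hpars]
      exact fun h => k.2 (Subtype.ext h)
    have h2 : ∀ x, x ≠ c → ∑ k : {j : {j : Fin (n - 1) // j ≠ a ∧ j ≠ b} // j ≠ ⟨c, hca, hcb⟩},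
        S x k.1.1 ^ 2 = (n : ℚ) ^ 2 - S x a ^ 2 - S x b ^ 2 := fun x hx => by
      rw [aux_sub1 (T := {j : Fin (n - 1) // j ≠ a ∧ j ≠ b}) ⟨c, hca, hcb⟩ (fun k => S x k.1 ^ 2),
        aux_sub2 a b hab (fun k => S x k ^ 2)]
      have h3 := hpars x hx
      simp only [fun j => hsymm j x] at h3
      rw [h3, hsymm x c, hc]; ring
    simp only [h1, Finset.sum_sub_distrib]
    rw [h2 a hca.symm, h2 b hcb.symm, hdiag, hdiag, hsymm b a, hSab]
    simp only [Finset.sum_const, Finset.card_univ, nsmul_eq_mul, hcard2]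
    ring
  have hnum : (∑ i, ∑ j, if i ≠ j then (∑ r : Fin n, X r i * X r j) ^ 2 else 0)
      = 2 * ((n : ℚ) ^ 3 - 6 * n ^ 2 + 2 * (8 * d - n) ^ 2) := by
    simp only [hX, Fintype.sum_sum_type, Sum.elim_inl, Sum.elim_inr, Finset.sum_add_distrib]
    have e1 : ∀ i j : {j : Fin (n - 1) // j ≠ a ∧ j ≠ b},
        (if (Sum.inl i : {j : Fin (n - 1) // j ≠ a ∧ j ≠ b} ⊕
          {j : {j : Fin (n - 1) // j ≠ a ∧ j ≠ b} // j ≠ ⟨c, hca, hcb⟩}) ≠ Sum.inl j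
          then (∑ r, H r i.1 * H r j.1) ^ 2 else 0) = 0 := fun i j => by
      split_ifs with h
      · rw [horth]
        · simp
        · exact fun h' => h (congrArg _ (Subtype.ext h'))
      · rfl
    have e2 : ∀ i j : {j : {j : Fin (n - 1) // j ≠ a ∧ j ≠ b} // j ≠ ⟨c, hca, hcb⟩},
        (if (Sum.inr i : {j : Fin (n - 1) // j ≠ a ∧ j ≠ b} ⊕
          {j : {j : Fin (n - 1) // j ≠ a ∧ j ≠ b} // j ≠ ⟨c, hca, hcb⟩}) ≠ Sum.inr j
          then (∑ r, H r c * H r i.1.1 * (H r c * H r j.1.1)) ^ 2 else 0) = 0 := fun i j => by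
      split_ifs with h
      · have h0 : ∑ r, H r c * H r i.1.1 * (H r c * H r j.1.1) = ∑ r, H r i.1.1 * H r j.1.1 :=
          Finset.sum_congr rfl fun r _ => by
            linear_combination (H r i.1.1 * H r j.1.1) * hsq r c
        rw [h0, horth]
        · simp
        · exact fun h' => h (congrArg _ (Subtype.ext (Subtype.ext h')))
      · rfl
    simp only [e1, e2, Finset.sum_const_zero, ne_eq, reduceCtorEq, not_false_eq_true, if_true,
      zero_add, add_zero]
    have e3 : ∀ (j : {j : Fin (n - 1) // j ≠ a ∧ j ≠ b})
        (k : {j : {j : Fin (n - 1) // j ≠ a ∧ j ≠ b} // j ≠ ⟨c, hca, hcb⟩}),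
        ∑ r, H r j.1 * (H r c * H r k.1.1) = S j.1 k.1.1 := fun j k =>
      Finset.sum_congr rfl fun r _ => by ring
    have e4 : ∀ (j : {j : Fin (n - 1) // j ≠ a ∧ j ≠ b})
        (k : {j : {j : Fin (n - 1) // j ≠ a ∧ j ≠ b} // j ≠ ⟨c, hca, hcb⟩}),
        ∑ r, H r c * H r k.1.1 * H r j.1 = S j.1 k.1.1 := fun j k => rfl
    simp only [e3, e4]
    have hT2 := hT
    rw [Finset.sum_comm] at hT2
    linarith
  unfold Es2
  rw [hnum, Fintype.card_sum]
  push_cast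
  rw [hcard1, hcard2]
  have : (2 * (n : ℚ) - 7) ≠ 0 := by linarith
  have : ((n : ℚ) - 4) ≠ 0 := by linarith
  have : ((n : ℚ) - 3 + (n - 4)) * ((n : ℚ) - 3 + (n - 4) - 1)
    = 2 * ((2 * (n : ℚ) - 7) * ((n : ℚ) - 4)) := by ring
  rw [this, mul_div_mul_left _ _ two_ne_zero]
  congr 1
  ring
end
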